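/- arXiv:1711.07123 — 6 statements merged into one kernel-verified Lean document; each statement's English description precedes it below -/
import Mathlib

section
/- Let F be a finite field with q = card F elements and let R be a commutative F-algebra. Then the set R^{Frob} := {r ∈ R : r^q = r} is a subring of R, and there exists a ring isomorphism Φ from R^{Frob} onto the ring of locally constant functions PrimeSpectrum R → F (pointwise operations) such that for every r ∈ R^{Frob} and every prime ideal 𝔭 of R one has r − algebraMap F R (Φ(r)(𝔭)) ∈ 𝔭. (In other words, {r ∈ R : r^q = r} is canonically identified with the ring F^{π₀(Spec R)} of continuous maps from π₀(Spec R) to the discrete set F.) -/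
/-!
Let `q = card F`. Evaluating `X ^ q - X = ∏ a : F, (X - a)` at an element `r` with `r ^ q = r`
shows that `∏ a, (r - a) = 0` in `R`, so modulo every prime `𝔭` the element `r` equals a constant
`a ∈ F`, unique because `F → R / 𝔭` is injective. The locus where this constant is a given `a` is
the closed set `V(r - a)`, and there are finitely many such sets, so the resulting function is
locally constant.

The map from Frobenius-fixed elements to locally constant functions is injective because an element
lying in every prime is nilpotent, and a nilpotent element fixed by the Frobenius vanishes. It is
surjective because each fibre `f ⁻¹' {a}` is clopen, hence cut out by an idempotent `e a`, and
`∑ a, a • e a` is a Frobenius-fixed element with value function `f`.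
-/

open Polynomial in
lemma prod_sub_algebraMap_eq {F : Type*} [Field F] [Fintype F] {R : Type*} [CommRing R]
    [Algebra F R] (r : R) :
    ∏ a : F, (r - algebraMap F R a) = r ^ Fintype.card F - r := by
  have hdeg : (X ^ Fintype.card F - X : F[X]).natDegree = Fintype.card F :=
    FiniteField.X_pow_card_sub_X_natDegree_eq F Fintype.one_lt_card
  have hmonic : (X ^ Fintype.card F - X : F[X]).Monic :=
    monic_X_pow_sub (by rw [degree_X]; exact_mod_cast Fintype.one_lt_card)
  have h := prod_multiset_X_sub_C_of_monic_of_roots_card_eq hmonic (by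
    rw [FiniteField.roots_X_pow_card_sub_X, hdeg]; rfl)
  rw [FiniteField.roots_X_pow_card_sub_X] at h
  change ∏ a : F, (X - C a) = _ at h
  have h2 := congrArg (aeval r) h
  simpa [map_prod] using h2

lemma exists_sub_algebraMap_mem {F : Type*} [Field F] [Fintype F] {R : Type*} [CommRing R]
    [Algebra F R] {r : R} (hr : r ^ Fintype.card F = r) (p : PrimeSpectrum R) :
    ∃ a : F, r - algebraMap F R a ∈ p.asIdeal := by
  have h : ∏ a : F, (r - algebraMap F R a) ∈ p.asIdeal := by
    rw [prod_sub_algebraMap_eq, hr, sub_self]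
    exact zero_mem _
  obtain ⟨a, -, ha⟩ := (p.2.prod_mem_iff).1 h
  exact ⟨a, ha⟩

lemma eq_of_algebraMap_sub_mem {F : Type*} [Field F] {R : Type*} [CommRing R]
    [Algebra F R] {p : PrimeSpectrum R} {a b : F}
    (h : algebraMap F R a - algebraMap F R b ∈ p.asIdeal) : a = b := by
  by_contra hab
  rw [← map_sub] at h
  exact p.2.ne_top (Ideal.eq_top_of_isUnit_mem _ h
    ((isUnit_iff_ne_zero.2 (sub_ne_zero.2 hab)).map (algebraMap F R)))

lemma eq_of_sub_algebraMap_mem {F : Type*} [Field F] {R : Type*} [CommRing R]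
    [Algebra F R] {p : PrimeSpectrum R} {r : R} {a b : F}
    (ha : r - algebraMap F R a ∈ p.asIdeal) (hb : r - algebraMap F R b ∈ p.asIdeal) : a = b :=
  eq_of_algebraMap_sub_mem (p := p) (R := R) (by simpa using sub_mem hb ha)

/-- The fibre of `f` over `a` is the closed set `V(r - a)`; as `F` is finite, every preimage under
`f` is a finite union of such sets, so it is clopen. -/
lemma isLocallyConstant_of_sub_mem {F : Type*} [Field F] [Finite F] {R : Type*} [CommRing R]
    [Algebra F R] {r : R} {f : PrimeSpectrum R → F}
    (hf : ∀ p, r - algebraMap F R (f p) ∈ p.asIdeal) : IsLocallyConstant f := by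
  intro s
  rw [← isClosed_compl_iff]
  have h : (f ⁻¹' s)ᶜ = ⋃ a ∈ sᶜ, PrimeSpectrum.zeroLocus {r - algebraMap F R a} := by
    ext p
    simp only [Set.mem_compl_iff, Set.mem_preimage, Set.mem_iUnion, PrimeSpectrum.mem_zeroLocus,
      Set.singleton_subset_iff, SetLike.mem_coe, exists_prop]
    refine ⟨fun hp => ⟨f p, hp, hf p⟩, ?_⟩
    rintro ⟨a, has, ha⟩
    rwa [eq_of_sub_algebraMap_mem (hf p) ha]
  rw [h]
  exact (Set.toFinite _).isClosed_biUnion fun a _ => PrimeSpectrum.isClosed_zeroLocus _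

lemma eq_zero_of_pow_card_eq {R : Type*} [CommRing R] {q : ℕ} (hq : 1 < q) {r : R}
    (hr : r ^ q = r) (h : ∀ p : PrimeSpectrum R, r ∈ p.asIdeal) : r = 0 := by
  obtain ⟨n, hn⟩ : IsNilpotent r := nilpotent_iff_mem_prime.2 fun J hJ => h ⟨J, hJ⟩
  have hpow : ∀ k : ℕ, r ^ q ^ k = r := by
    intro k
    induction k with
    | zero => simp
    | succ k ih => rw [pow_succ, pow_mul, ih, hr]
  rw [← hpow n]
  exact pow_eq_zero_of_le (Nat.lt_pow_self hq).le hn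

/-- The element is `∑ a, a • e a`, with `e a` the idempotent cutting out the fibre of `f` over `a`;
it is fixed because the `q`-power map is `F`-linear and fixes idempotents. -/
lemma exists_fixed_of_locallyConstant {F : Type*} [Field F] [Fintype F] {R : Type*} [CommRing R]
    [Algebra F R] (f : LocallyConstant (PrimeSpectrum R) F) :
    ∃ r : R, r ^ Fintype.card F = r ∧ ∀ p, r - algebraMap F R (f p) ∈ p.asIdeal := by
  classical
  choose e he hfe using fun a : F => PrimeSpectrum.exists_idempotent_basicOpen_eq_of_isClopen
    (f.isLocallyConstant.isClopen_fiber a)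
  refine ⟨∑ a, a • e a, ?_, fun p => ?_⟩
  · change FiniteField.frobeniusAlgHom F R (∑ a, a • e a) = _
    rw [map_sum]
    refine Finset.sum_congr rfl fun a _ => ?_
    rw [map_smul, FiniteField.frobeniusAlgHom_apply, (he a).pow_eq Fintype.card_ne_zero]
  · have hmem : ∀ a, e a ∉ p.asIdeal ↔ f p = a := fun a => by
      have : p ∈ {x | f x = a} ↔ p ∈ (PrimeSpectrum.basicOpen (e a) : Set _) := by
        rw [← hfe]; rfl
      simpa using this.symm
    have h1 : e (f p) - 1 ∈ p.asIdeal := by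
      have h0 : e (f p) * (e (f p) - 1) ∈ p.asIdeal := by
        rw [mul_sub, mul_one, (he (f p)).eq, sub_self]
        exact zero_mem _
      exact (p.2.mem_or_mem h0).resolve_left ((hmem _).2 rfl)
    rw [← Finset.add_sum_erase _ _ (Finset.mem_univ (f p)), Algebra.smul_def, add_sub_right_comm]
    refine add_mem ?_ (sum_mem fun a ha => ?_)
    · simpa [mul_sub] using p.asIdeal.mul_mem_left (algebraMap F R (f p)) h1
    · rw [Algebra.smul_def]
      refine p.asIdeal.mul_mem_left _ ?_
      by_contra hc
      exact Finset.ne_of_mem_erase ha ((hmem a).1 hc).symm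

/-- **Appendix Lemma (Frobenius fixed elements).**
Let `F` be a finite field with `q = card F` elements and `R` a commutative `F`-algebra.
Then `{r ∈ R : r ^ q = r}` is a subring of `R`, canonically isomorphic (as a ring) to the
ring of locally constant functions `PrimeSpectrum R → F`, the identification being
characterized by `r - algebraMap F R (Φ r 𝔭) ∈ 𝔭` for all primes `𝔭`. -/
theorem frobenius_fixed_elements_eq_locally_constant
    (F : Type*) [Field F] [Fintype F] (R : Type*) [CommRing R] [Algebra F R] :
    ∃ S : Subring R, (S : Set R) = {r : R | r ^ Fintype.card F = r} ∧
      ∃ Φ : S ≃+* LocallyConstant (PrimeSpectrum R) F,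
        ∀ (r : S) (𝔭 : PrimeSpectrum R),
          (r : R) - algebraMap F R (Φ r 𝔭) ∈ 𝔭.asIdeal := by
  let S : Subring R := RingHom.eqLocus (FiniteField.frobeniusAlgHom F R : R →+* R) (RingHom.id R)
  have hS : ∀ r : S, (r : R) ^ Fintype.card F = r := fun r => r.2
  refine ⟨S, rfl, ?_⟩
  choose v hv using fun r : S => exists_sub_algebraMap_mem (F := F) (hS r)
  let φ : S → LocallyConstant (PrimeSpectrum R) F :=
    fun r => ⟨v r, isLocallyConstant_of_sub_mem (hv r)⟩
  have hφ : ∀ (r : S) p, (r : R) - algebraMap F R (φ r p) ∈ p.asIdeal := hv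
  have hbij : Function.Bijective φ := by
    constructor
    · intro r s hrs
      rw [← sub_eq_zero]
      refine Subtype.ext (eq_zero_of_pow_card_eq Fintype.one_lt_card (hS (r - s)) fun p => ?_)
      have hr := hφ r p
      rw [hrs] at hr
      simpa using sub_mem hr (hφ s p)
    · intro f
      obtain ⟨r, hr, hrf⟩ := exists_fixed_of_locallyConstant f
      exact ⟨⟨r, hr⟩, LocallyConstant.ext fun p => eq_of_sub_algebraMap_mem (hφ ⟨r, hr⟩ p) (hrf p)⟩
  refine ⟨{ Equiv.ofBijective φ hbij with
    map_mul' := fun r s => LocallyConstant.ext fun p =>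
      eq_of_sub_algebraMap_mem (hφ (r * s) p) ?_
    map_add' := fun r s => LocallyConstant.ext fun p =>
      eq_of_sub_algebraMap_mem (hφ (r + s) p) ?_ }, hφ⟩
  · change (r : R) * s - algebraMap F R (φ r p * φ s p) ∈ p.asIdeal
    have h := add_mem (p.asIdeal.mul_mem_right (s : R) (hφ r p))
      (p.asIdeal.mul_mem_left (algebraMap F R (φ r p)) (hφ s p))
    convert h using 1
    rw [map_mul]
    ring
  · change (r : R) + s - algebraMap F R (φ r p + φ s p) ∈ p.asIdeal
    convert add_mem (hφ r p) (hφ s p) using 1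
    rw [map_add]
    ring
end

section
/- Let F be a finite field with q = card F elements, let R be a commutative F-algebra, let r ∈ R satisfy r^q = r, and let 𝔭 be a prime ideal of R. Then there exists a unique element a ∈ F such that r − algebraMap F R a ∈ 𝔭. -/
/-!
Over `F` one has `X ^ q - X = ∏ a, (X - a)`. Evaluating at `r` gives `∏ a, (r - a) = 0` in `R`,
so some factor `r - a` lies in the prime ideal `𝔭`. Two such `a` would differ by a nonzero
element of `F` whose image, a unit of `R`, lies in `𝔭`, which is impossible.
-/

open Polynomial

/-- Let `F` be a finite field with `q = card F` elements, `R` a commutative `F`-algebra,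
`r ∈ R` with `r ^ q = r`, and `𝔭` a prime ideal of `R`.  Then there is a unique `a ∈ F`
with `r - algebraMap F R a ∈ 𝔭`. -/
theorem existsUnique_residue_of_pow_card_eq
    (F : Type*) [Field F] [Fintype F] (R : Type*) [CommRing R] [Algebra F R]
    (r : R) (hr : r ^ Fintype.card F = r) (𝔭 : PrimeSpectrum R) :
    ∃! a : F, r - algebraMap F R a ∈ 𝔭.asIdeal := by
  have hdeg := FiniteField.X_pow_card_sub_X_natDegree_eq F (Fintype.one_lt_card (α := F))
  have hmonic : (X ^ Fintype.card F - X : F[X]).Monic :=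
    monic_X_pow_sub (by rw [degree_X]; exact_mod_cast Fintype.one_lt_card (α := F))
  have hprod : ∏ a : F, (X - C a) = X ^ Fintype.card F - X := by
    have h := prod_multiset_X_sub_C_of_monic_of_roots_card_eq hmonic
      (by rw [FiniteField.roots_X_pow_card_sub_X, hdeg]; rfl)
    rwa [FiniteField.roots_X_pow_card_sub_X] at h
  -- Evaluating the factorization at `r` shows that the product vanishes, hence lies in `𝔭`.
  have hmem : ∏ a : F, (r - algebraMap F R a) ∈ 𝔭.asIdeal := by
    have h := congrArg (aeval r) hprod
    simp only [map_prod, map_sub, map_pow, aeval_X, aeval_C, hr, sub_self] at h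
    exact h ▸ zero_mem _
  obtain ⟨a, -, ha⟩ := (Ideal.IsPrime.prod_mem_iff (hp := 𝔭.isPrime)).1 hmem
  refine ⟨a, ha, fun b hb => ?_⟩
  -- For `b ≠ a`, the difference `a - b` is a unit of `F`, so its image cannot lie in `𝔭`.
  by_contra hne
  have hab : algebraMap F R (a - b) ∈ 𝔭.asIdeal := by
    simpa using sub_mem hb ha
  exact 𝔭.isPrime.ne_top (Ideal.eq_top_of_isUnit_mem _ hab
    ((sub_ne_zero.2 (Ne.symm hne)).isUnit.map (algebraMap F R)))
end

section
/- Let F be a finite field with q = card F elements, let R be a commutative F-algebra, and let r ∈ R satisfy r^q = r. For each prime ideal 𝔭 of R, let ρ_r(𝔭) ∈ F denote the unique element a ∈ F with r − algebraMap F R a ∈ 𝔭 (such a exists and is unique). Then the function ρ_r : PrimeSpectrum R → F is locally constant, i.e. continuous for the Zariski topology on PrimeSpectrum R and the discrete topology on F. -/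
/-!
The fibres of `ρ` are the closed sets `V(r - a)`, `a ∈ F`: two different scalars cannot both be
residues of `r` at one prime, since their difference is a unit of `R`. These finitely many disjoint
closed sets cover `Spec R`, so each of them is also open.
-/

/-- Let `F` be a finite field with `q = card F` elements, `R` a commutative `F`-algebra and
`r ∈ R` with `r ^ q = r`.  If `ρ : PrimeSpectrum R → F` records, at each prime `𝔭`, the
(unique) element `a ∈ F` with `r - algebraMap F R a ∈ 𝔭`, then `ρ` is locally constant. -/
theorem isLocallyConstant_residue_of_pow_card_eq
    (F : Type*) [Field F] [Fintype F] (R : Type*) [CommRing R] [Algebra F R]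
    (r : R) (hr : r ^ Fintype.card F = r)
    (ρ : PrimeSpectrum R → F)
    (hρ : ∀ 𝔭 : PrimeSpectrum R, r - algebraMap F R (ρ 𝔭) ∈ 𝔭.asIdeal) :
    IsLocallyConstant ρ := by
  -- Distinct scalars differ by a unit, so the fibre of `ρ` over `a` is exactly `V(r - a)`.
  have fiber (a : F) :
      ρ ⁻¹' {a} = PrimeSpectrum.zeroLocus {r - algebraMap F R a} := by
    ext 𝔭
    simp only [Set.mem_preimage, Set.mem_singleton_iff, PrimeSpectrum.mem_zeroLocus,
      Set.singleton_subset_iff, SetLike.mem_coe]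
    refine ⟨fun h => h ▸ hρ 𝔭, fun h => ?_⟩
    by_contra hne
    have hmem : algebraMap F R (ρ 𝔭 - a) ∈ 𝔭.asIdeal := by
      have := 𝔭.asIdeal.sub_mem h (hρ 𝔭)
      rwa [sub_sub_sub_cancel_left, ← map_sub] at this
    exact 𝔭.isPrime.ne_top (Ideal.eq_top_of_isUnit_mem _ hmem
      ((sub_ne_zero.mpr hne).isUnit.map (algebraMap F R)))
  -- As `F` is finite, the complement of any preimage is a finite union of these closed sets.
  intro s
  rw [← isClosed_compl_iff, ← Set.preimage_compl, ← Set.biUnion_preimage_singleton]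
  refine (Set.toFinite sᶜ).isClosed_biUnion fun a _ => ?_
  rw [fiber a]
  exact PrimeSpectrum.isClosed_zeroLocus _
end

section
/- Let F be a finite field with q = card F elements and let R be a commutative F-algebra. For every locally constant function f : PrimeSpectrum R → F there exists a unique element r ∈ R such that r^q = r and, for every prime ideal 𝔭 of R, r − algebraMap F R (f 𝔭) ∈ 𝔭. -/
/-!
The `q`-power map is an `F`-algebra endomorphism of `R` (`FiniteField.frobeniusAlgHom`).
For existence, let `e a` be the idempotent whose basic open set is the clopen fibre `f ⁻¹' {a}`;
then `r = ∑ a, a • e a` is fixed by Frobenius, and modulo `𝔭` the idempotent `e a` is `1` if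
`f 𝔭 = a` and `0` otherwise. For uniqueness, the difference of two solutions lies in every prime,
hence is nilpotent, and it is fixed by Frobenius, hence equal to arbitrarily high powers of itself.
-/

/-- A nilpotent element `x` with `x ^ q = x` vanishes, since `x = x ^ q ^ n` for all `n`. -/
lemma eq_zero_of_isNilpotent_of_pow_eq {R : Type*} [CommRing R] {q : ℕ} (hq : 1 < q) {x : R}
    (hx : IsNilpotent x) (h : x ^ q = x) : x = 0 := by
  obtain ⟨n, hn⟩ := hx
  have hpow : ∀ k : ℕ, x ^ q ^ k = x := by
    intro k
    induction k with
    | zero => simp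
    | succ k ih => rw [pow_succ, pow_mul, ih, h]
  rw [← hpow n]
  exact pow_eq_zero_of_le (Nat.lt_pow_self hq).le hn

/-- Let `F` be a finite field with `q = card F` elements and `R` a commutative `F`-algebra.
For every locally constant function `f : PrimeSpectrum R → F` there is a unique `r ∈ R`
with `r ^ q = r` and `r - algebraMap F R (f 𝔭) ∈ 𝔭` for every prime ideal `𝔭` of `R`. -/
theorem existsUnique_of_locallyConstant
    (F : Type*) [Field F] [Fintype F] (R : Type*) [CommRing R] [Algebra F R]
    (f : LocallyConstant (PrimeSpectrum R) F) :
    ∃! r : R, r ^ Fintype.card F = r ∧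
      ∀ 𝔭 : PrimeSpectrum R, r - algebraMap F R (f 𝔭) ∈ 𝔭.asIdeal := by
  classical
  have frob (x : R) : FiniteField.frobeniusAlgHom F R x = x ^ Fintype.card F := rfl
  refine existsUnique_of_exists_of_unique ?_ ?_
  · choose e he hes using fun a : F =>
      PrimeSpectrum.exists_idempotent_basicOpen_eq_of_isClopen (f.isLocallyConstant.isClopen_fiber a)
    have hmem (a : F) (𝔭 : PrimeSpectrum R) : f 𝔭 = a ↔ e a ∉ 𝔭.asIdeal :=
      Set.ext_iff.mp (hes a) 𝔭
    refine ⟨∑ a, a • e a, ?_, fun 𝔭 => ?_⟩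
    · rw [← frob, map_sum]
      refine Finset.sum_congr rfl fun a _ => ?_
      rw [map_smul, frob, (he a).pow_eq Fintype.card_ne_zero]
    · have hsum : algebraMap F R (f 𝔭) = ∑ a, if f 𝔭 = a then algebraMap F R a else 0 := by simp
      rw [hsum, ← Finset.sum_sub_distrib]
      refine Ideal.sum_mem _ fun a _ => ?_
      rw [Algebra.smul_def]
      split_ifs with h
      · have h1 : e a * (e a - 1) ∈ 𝔭.asIdeal := by
          rw [mul_sub, (he a).eq, mul_one, sub_self]
          exact zero_mem _
        have h2 := (𝔭.isPrime.mem_or_mem h1).resolve_left ((hmem a 𝔭).mp h)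
        simpa [mul_sub] using 𝔭.asIdeal.mul_mem_left (algebraMap F R a) h2
      · rw [sub_zero]
        exact Ideal.mul_mem_left _ _ (not_not.mp fun h' => h ((hmem a 𝔭).mpr h'))
  · rintro r s ⟨hr, hrf⟩ ⟨hs, hsf⟩
    refine sub_eq_zero.mp (eq_zero_of_isNilpotent_of_pow_eq (Fintype.one_lt_card (α := F)) ?_ ?_)
    · rw [← mem_nilradical, nilradical_eq_sInf, Ideal.mem_sInf]
      intro I hI
      simpa using I.sub_mem (hrf ⟨I, hI⟩) (hsf ⟨I, hI⟩)
    · rw [← frob, map_sub, frob, frob, hr, hs]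
end

section
/- Let p be a prime, let R be a perfect commutative ring of characteristic p, and let S be a profinite topological space (compact, Hausdorff, totally disconnected). Let 𝕎 denote the p-typical Witt vector functor, and consider the ring homomorphism Φ : 𝕎(LocallyConstant S R) → (S → 𝕎 R) whose component at s ∈ S is 𝕎 applied to the evaluation-at-s ring homomorphism LocallyConstant S R → R. Then Φ is injective, and its range consists exactly of those functions g : S → 𝕎 R such that, for every n ∈ ℕ, the composite of g with the quotient map 𝕎 R → 𝕎 R / (p)^n is locally constant; equivalently, the range of Φ is the set of continuous maps S → 𝕎 R when 𝕎 R carries the p-adic topology and R is discrete. In other words, 𝕎(R^S) = 𝕎(R)^S where R^S denotes continuous maps from S to the discrete ring R and 𝕎(R)^S continuous maps from S to 𝕎(R) with the p-adic topology. -/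
/-!
Over a perfect ring of characteristic `p`, the ideal `(p)^n` of `𝕎 R` consists of the Witt vectors
whose first `n` coefficients vanish, so two Witt vectors agree modulo `(p)^n` exactly when their
first `n` coefficients agree (`mk_span_p_pow_eq_iff`). Hence `g : S → 𝕎 R` is locally constant
modulo every `(p)^n` if and only if each coefficient of `g` is a locally constant function `S → R`
(only finitely many coefficients matter for a given `n`). Such a sequence of locally constant
functions is precisely a Witt vector over `LocallyConstant S R`; as `𝕎` of a ring homomorphism acts
coefficientwise, both claims follow.
-/

theorem mk_span_p_pow_eq_iff {p : ℕ} [Fact p.Prime] {R : Type*} [CommRing R] [CharP R p]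
    [PerfectRing R p] (x y : WittVector p R) (n : ℕ) :
    Ideal.Quotient.mk ((Ideal.span {(p : WittVector p R)}) ^ n) x =
        Ideal.Quotient.mk ((Ideal.span {(p : WittVector p R)}) ^ n) y ↔
      ∀ m < n, x.coeff m = y.coeff m := by
  rw [Ideal.Quotient.eq, Ideal.span_singleton_pow,
    WittVector.mem_span_p_pow_iff_le_coeff_eq_zero,
    WittVector.le_coeff_eq_iff_le_sub_coeff_eq_zero]

theorem isLocallyConstant_mk_iff_coeff {p : ℕ} [Fact p.Prime] {R : Type*} [CommRing R] [CharP R p]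
    [PerfectRing R p] {S : Type*} [TopologicalSpace S] (g : S → WittVector p R) :
    (∀ n : ℕ, IsLocallyConstant fun s =>
        Ideal.Quotient.mk ((Ideal.span {(p : WittVector p R)}) ^ n) (g s)) ↔
      ∀ m : ℕ, IsLocallyConstant fun s => (g s).coeff m := by
  simp only [IsLocallyConstant.iff_eventually_eq, mk_span_p_pow_eq_iff]
  constructor
  · intro h m s
    filter_upwards [h (m + 1) s] with t ht using ht m m.lt_succ_self
  · intro h n s
    exact (Filter.eventually_all_finite (Set.finite_lt_nat n)).2 fun m _ => h m s

/-- **Appendix Lemma (product of Witt vectors).**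
Let `p` be a prime, `R` a perfect commutative ring of characteristic `p`, and `S` a
profinite space.  The ring homomorphism
`Φ : 𝕎(LocallyConstant S R) → (S → 𝕎 R)` whose `s`-component is `𝕎` applied to
evaluation at `s` is injective, and its range is exactly the set of functions
`g : S → 𝕎 R` whose composite with each quotient map `𝕎 R → 𝕎 R ⧸ (p)^n` is locally
constant; i.e. `𝕎(R^S) = 𝕎(R)^S` (continuous maps for the `p`-adic topology). -/
theorem wittVector_locallyConstant
    (p : ℕ) [Fact p.Prime] (R : Type*) [CommRing R] [CharP R p]
    (hperf : Function.Bijective fun x : R => x ^ p)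
    (S : Type*) [TopologicalSpace S] [CompactSpace S] [T2Space S]
    [TotallyDisconnectedSpace S] :
    Function.Injective
        (Pi.ringHom fun s : S =>
          WittVector.map (p := p) (LocallyConstant.evalRingHom (Y := R) s)) ∧
      Set.range
          (Pi.ringHom fun s : S =>
            WittVector.map (p := p) (LocallyConstant.evalRingHom (Y := R) s)) =
        {g : S → WittVector p R | ∀ n : ℕ,
          IsLocallyConstant fun s =>
            Ideal.Quotient.mk ((Ideal.span {(p : WittVector p R)}) ^ n) (g s)} := by
  have : PerfectRing R p := ⟨hperf⟩
  refine ⟨fun x y hxy => ?_, Set.ext fun g => ?_⟩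
  · ext m s
    have h := congrArg (fun w : WittVector p R => w.coeff m) (congrFun hxy s)
    exact h
  · rw [Set.mem_ofPred_eq, isLocallyConstant_mk_iff_coeff]
    constructor
    · rintro ⟨x, rfl⟩ m
      exact (x.coeff m).isLocallyConstant
    · intro h
      refine ⟨WittVector.mk p fun m => ⟨fun s => (g s).coeff m, h m⟩, ?_⟩
      ext s m
      rfl
end

section
/- Let p be a prime and let R be a perfect commutative ring of characteristic p. Let (R_i)_{i} be a family of subrings of R, directed under inclusion, such that each R_i is closed under p-th roots (for every x ∈ R_i there is y ∈ R_i with y^p = x, so each R_i is itself perfect of characteristic p) and such that R is the union of the R_i. Then: (a) the union of the images of the maps 𝕎 R_i → 𝕎 R (Witt vector functoriality applied to the inclusions) is dense in 𝕎 R for the p-adic topology, i.e. for every w ∈ 𝕎 R and every n ∈ ℕ there exist an index i and v ∈ 𝕎 R_i with w − (𝕎 of the inclusion)(v) ∈ (p)^n ⊆ 𝕎 R; and (b) 𝕎 R is p-adically separated and complete (IsAdicComplete for the ideal (p) of 𝕎 R). Consequently 𝕎 R is the p-adic completion of the directed colimit of the rings 𝕎 R_i. -/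
/-!
Since `R` is perfect, `(p)^n` consists of the Witt vectors whose first `n` coefficients vanish,
so approximating `w` modulo `(p)^n` only means matching its first `n` coefficients. By
directedness these lie in a single `Rᵢ`, and the Witt vector over `Rᵢ` with these coefficients,
extended by zero, maps to an approximation of `w`. Completeness is Mathlib's
`WittVector.isAdicCompleteIdealSpanP`.
-/

/-- Finitely many elements of a directed union of subrings lie in a common member. -/
theorem exists_common_subring {R : Type*} [CommRing R] {ι : Type*} (Rs : ι → Subring R)
    (hdir : Directed (· ≤ ·) Rs) (hunion : ∀ x : R, ∃ i, x ∈ Rs i) (f : ℕ → R) (n : ℕ) :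
    ∃ i, ∀ m < n, f m ∈ Rs i := by
  induction n with
  | zero => exact ⟨(hunion 0).choose, fun m hm => absurd hm (Nat.not_lt_zero m)⟩
  | succ n ih =>
    obtain ⟨i, hi⟩ := ih
    obtain ⟨j, hj⟩ := hunion (f n)
    obtain ⟨k, hik, hjk⟩ := hdir i j
    refine ⟨k, fun m hm => ?_⟩
    rcases Nat.lt_succ_iff_lt_or_eq.mp hm with h | rfl
    · exact hik (hi m h)
    · exact hjk hj

/-- Let `p` be a prime and `R` a perfect commutative ring of characteristic `p`.
Let `(Rᵢ)` be a directed (under inclusion) family of subrings of `R`, each closed under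
`p`-th roots, whose union is all of `R`.  Then
(a) the union of the images of the maps `𝕎 Rᵢ → 𝕎 R` is `p`-adically dense in `𝕎 R`, and
(b) `𝕎 R` is `p`-adically separated and complete; hence `𝕎 R` is the `p`-adic completion
of the directed colimit of the rings `𝕎 Rᵢ`. -/
theorem wittVector_directed_union
    (p : ℕ) [Fact p.Prime] (R : Type*) [CommRing R] [CharP R p]
    (hperf : Function.Bijective fun x : R => x ^ p)
    {ι : Type*} (Rs : ι → Subring R)
    (hdir : Directed (· ≤ ·) Rs)
    (hroot : ∀ i, ∀ x ∈ Rs i, ∃ y ∈ Rs i, y ^ p = x)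
    (hunion : ∀ x : R, ∃ i, x ∈ Rs i) :
    (∀ (w : WittVector p R) (n : ℕ), ∃ (i : ι) (v : WittVector p (Rs i)),
        w - WittVector.map (p := p) (Rs i).subtype v ∈
          (Ideal.span {(p : WittVector p R)}) ^ n) ∧
      IsAdicComplete (Ideal.span {(p : WittVector p R)}) (WittVector p R) := by
  have : PerfectRing R p := ⟨hperf⟩
  refine ⟨fun w n => ?_, WittVector.isAdicCompleteIdealSpanP⟩
  obtain ⟨i, hi⟩ := exists_common_subring Rs hdir hunion w.coeff n
  refine ⟨i, WittVector.mk p fun m => if h : m < n then ⟨w.coeff m, hi m h⟩ else 0, ?_⟩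
  rw [Ideal.span_singleton_pow, WittVector.mem_span_p_pow_iff_le_coeff_eq_zero,
    ← WittVector.le_coeff_eq_iff_le_sub_coeff_eq_zero]
  intro m hm
  simp [WittVector.map_coeff, hm]
end
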